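/- arXiv:2604.05862 — 6 statements merged into one kernel-verified Lean document; each statement's English description precedes it below -/
import Mathlib

section
/- Let M be a valid message pattern, θ = (i,t) a node, and j a process. Then the set {l : ℕ | (j,l) ∈ past(θ)} is downward closed and contained in {l | l < t}. Consequently there exists a least time t_j such that (j, t_j) ∉ past(θ); it satisfies t_j ≤ t, and (j,l) ∈ past(θ) if and only if l < t_j. Moreover, for j = i one has t_i = t. -/
/-- The happens-before relation of a message pattern `M`: the transitive closure of
"same process, strictly earlier time" together with the messages of `M`. -/
def hb {ι : Type*} (M : Set ((ι × ℕ) × (ι × ℕ))) : (ι × ℕ) → (ι × ℕ) → Prop :=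
  Relation.TransGen (fun θ θ' => (θ.1 = θ'.1 ∧ θ.2 < θ'.2) ∨ (θ, θ') ∈ M)

/-- A message pattern is valid if every message is sent strictly before it is delivered. -/
def ValidPattern {ι : Type*} (M : Set ((ι × ℕ) × (ι × ℕ))) : Prop :=
  ∀ m ∈ M, m.1.2 < m.2.2

/-- The past of a node `θ`: all nodes with a message chain to `θ`. -/
def past {ι : Type*} (M : Set ((ι × ℕ) × (ι × ℕ))) (θ : ι × ℕ) : Set (ι × ℕ) :=
  {θ' | hb M θ' θ}

open scoped Classical in
/-- The shift map `φ_{θ,Δ}`: fixes `past(θ) ∪ {θ}`, delays every other node by `Δ`. -/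
noncomputable def shiftMap {ι : Type*} (M : Set ((ι × ℕ) × (ι × ℕ))) (θ : ι × ℕ) (Δ : ℕ)
    (ν : ι × ℕ) : ι × ℕ :=
  if ν ∈ past M θ ∨ ν = θ then ν else (ν.1, ν.2 + Δ)

/-- The message pattern obtained by applying the shift map to both endpoints of
every message of `M`. -/
noncomputable def shiftPattern {ι : Type*} (M : Set ((ι × ℕ) × (ι × ℕ))) (θ : ι × ℕ)
    (Δ : ℕ) : Set ((ι × ℕ) × (ι × ℕ)) :=
  (fun m => (shiftMap M θ Δ m.1, shiftMap M θ Δ m.2)) '' M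

theorem hb_of_lt {ι : Type*} (M : Set ((ι × ℕ) × (ι × ℕ))) (p : ι) {s t : ℕ} (hst : s < t) :
    hb M (p, s) (p, t) :=
  .single (.inl ⟨rfl, hst⟩)

theorem isLowerSet_setOf_mem_past {ι : Type*} (M : Set ((ι × ℕ) × (ι × ℕ))) (θ : ι × ℕ) (j : ι) :
    IsLowerSet {l : ℕ | (j, l) ∈ past M θ} := by
  intro l l' hle hl
  obtain rfl | hlt := hle.eq_or_lt
  · exact hl
  · exact (hb_of_lt M j hlt).trans hl

namespace ValidPattern

variable {ι : Type*} {M : Set ((ι × ℕ) × (ι × ℕ))}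

theorem snd_lt_snd_of_hb (hM : ValidPattern M) {θ θ' : ι × ℕ} (h : hb M θ θ') : θ.2 < θ'.2 := by
  have snd_lt_of_step : ∀ {a b : ι × ℕ}, (a.1 = b.1 ∧ a.2 < b.2) ∨ (a, b) ∈ M → a.2 < b.2 :=
    fun step => step.elim And.right (hM _)
  induction h with
  | single step => exact snd_lt_of_step step
  | tail _ step ih => exact ih.trans (snd_lt_of_step step)

theorem setOf_mem_past_subset_Iio (hM : ValidPattern M) (θ : ι × ℕ) (j : ι) :
    {l : ℕ | (j, l) ∈ past M θ} ⊆ Set.Iio θ.2 :=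
  fun _ hl => hM.snd_lt_snd_of_hb hl

theorem exists_setOf_mem_past_eq_Iio (hM : ValidPattern M) (θ : ι × ℕ) (j : ι) :
    ∃ tj : ℕ, {l : ℕ | (j, l) ∈ past M θ} = Set.Iio tj := by
  refine (isLowerSet_setOf_mem_past M θ j).eq_univ_or_Iio.resolve_left fun huniv => ?_
  have hmem : (j, θ.2) ∈ past M θ := Set.eq_univ_iff_forall.mp huniv θ.2
  exact (hM.snd_lt_snd_of_hb hmem).false

theorem setOf_mem_past_self_eq_Iio (hM : ValidPattern M) (θ : ι × ℕ) :
    {l : ℕ | (θ.1, l) ∈ past M θ} = Set.Iio θ.2 :=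
  (hM.setOf_mem_past_subset_Iio θ θ.1).antisymm fun _ hl => hb_of_lt M θ.1 hl

end ValidPattern

/-- The set of times `l` with `(j,l)` in the past of `θ = (i,t)` is downward closed and
contained in `{l | l < t}`; hence there is a least time `t_j` with `(j,t_j) ∉ past(θ)`,
which satisfies `t_j ≤ t`, characterizes the past of `θ` on process `j`'s line, and
equals `t` when `j = i`. -/
theorem past_on_process_line {ι : Type*} (M : Set ((ι × ℕ) × (ι × ℕ)))
    (hM : ValidPattern M) (i j : ι) (t : ℕ) :
    (∀ l l' : ℕ, l' ≤ l → (j, l) ∈ past M (i, t) → (j, l') ∈ past M (i, t)) ∧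
    ({l : ℕ | (j, l) ∈ past M (i, t)} ⊆ {l : ℕ | l < t}) ∧
    ∃ tj : ℕ, IsLeast {l : ℕ | (j, l) ∉ past M (i, t)} tj ∧ tj ≤ t ∧
      (∀ l : ℕ, (j, l) ∈ past M (i, t) ↔ l < tj) ∧ (j = i → tj = t) := by
  have hlower := isLowerSet_setOf_mem_past M (i, t) j
  have hbound := hM.setOf_mem_past_subset_Iio (i, t) j
  obtain ⟨tj, htj⟩ := hM.exists_setOf_mem_past_eq_Iio (i, t) j
  have hcompl : {l : ℕ | (j, l) ∉ past M (i, t)} = Set.Ici tj := by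
    rw [← Set.compl_Iio, ← htj, Set.compl_ofPred]
  refine ⟨fun _ _ hle hl => hlower hle hl, hbound, tj, ?_, ?_, Set.ext_iff.mp htj, ?_⟩
  · exact hcompl ▸ isLeast_Ici
  · exact Set.Iio_subset_Iio_iff.mp (htj ▸ hbound)
  · rintro rfl
    exact Set.Iio_injective (htj.symm.trans (hM.setOf_mem_past_self_eq_Iio (j, t)))
end

section
/- Shift validity: Let M be a valid message pattern, θ a node, Δ > 0, and φ = φ_{θ,Δ} the shift map. Then φ(M) is a valid message pattern, i.e., for every message of φ(M) the time of its send node is strictly smaller than the time of its delivery node. -/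
section ShiftMap

variable {ι : Type*} {M : Set ((ι × ℕ) × (ι × ℕ))} {θ ν ν' : ι × ℕ} {Δ : ℕ}

theorem hb_of_mem (h : (ν, ν') ∈ M) : hb M ν ν' :=
  .single (.inr h)

theorem mem_past_of_hb (h : hb M ν ν') (hν' : ν' ∈ past M θ ∨ ν' = θ) : ν ∈ past M θ := by
  rcases hν' with hν' | rfl
  · exact Relation.TransGen.trans h hν'
  · exact h

theorem shiftMap_of_mem_past_or_eq (h : ν ∈ past M θ ∨ ν = θ) : shiftMap M θ Δ ν = ν :=
  if_pos h

theorem shiftMap_of_not_mem_past_or_eq (h : ¬(ν ∈ past M θ ∨ ν = θ)) :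
    shiftMap M θ Δ ν = (ν.1, ν.2 + Δ) :=
  if_neg h

theorem shiftMap_snd_le : (shiftMap M θ Δ ν).2 ≤ ν.2 + Δ := by
  by_cases h : ν ∈ past M θ ∨ ν = θ
  · rw [shiftMap_of_mem_past_or_eq h]
    exact Nat.le_add_right ..
  · rw [shiftMap_of_not_mem_past_or_eq h]

-- The past is closed under predecessors, so `φ` never delays `ν` while fixing `ν'`.
theorem shiftMap_snd_lt_of_hb (h : hb M ν ν') (hlt : ν.2 < ν'.2) :
    (shiftMap M θ Δ ν).2 < (shiftMap M θ Δ ν').2 := by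
  by_cases hν' : ν' ∈ past M θ ∨ ν' = θ
  · have hν : ν ∈ past M θ := mem_past_of_hb h hν'
    rwa [shiftMap_of_mem_past_or_eq (.inl hν), shiftMap_of_mem_past_or_eq hν']
  · calc (shiftMap M θ Δ ν).2 ≤ ν.2 + Δ := shiftMap_snd_le
      _ < ν'.2 + Δ := Nat.add_lt_add_right hlt Δ
      _ = (shiftMap M θ Δ ν').2 := by rw [shiftMap_of_not_mem_past_or_eq hν']

end ShiftMap

/-- Shift validity: the shifted pattern `φ(M)` is again a valid message pattern. -/
theorem shiftPattern_valid {ι : Type*} (M : Set ((ι × ℕ) × (ι × ℕ)))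
    (hM : ValidPattern M) (θ : ι × ℕ) (Δ : ℕ) (hΔ : 0 < Δ) :
    ValidPattern (shiftPattern M θ Δ) := by
  rintro _ ⟨⟨ν, ν'⟩, hmem, rfl⟩
  exact shiftMap_snd_lt_of_hb (hb_of_mem hmem) (hM _ hmem)
end

section
/- Let M be a valid message pattern, θ a node, Δ > 0, and φ = φ_{θ,Δ} the shift map. For every process j, the function sending m : ℕ to the time of φ(j,m) is strictly monotone; consequently φ is injective on nodes. -/
/-!
On each process line, the nodes fixed by the shift map form an initial segment, because an earlier
node of a process happens before every later one. So along a process the shift keeps the times of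
an initial segment and delays all later ones by the same amount, which preserves strict order.
Processes are never changed, so equal images lie on one process and have equal times.
-/

section

variable {ι : Type*} {M : Set ((ι × ℕ) × (ι × ℕ))} {θ : ι × ℕ}

theorem hb_of_lt_s5 (j : ι) {m n : ℕ} (hmn : m < n) : hb M (j, m) (j, n) :=
  .single (.inl ⟨rfl, hmn⟩)

theorem mem_past_of_hb_s5 {μ ν : ι × ℕ} (hμν : hb M μ ν) (hν : ν ∈ past M θ ∨ ν = θ) :
    μ ∈ past M θ := by
  obtain hν | rfl := hν
  · exact hμν.trans hν
  · exact hμν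

variable (M θ) (Δ : ℕ)

theorem shiftMap_fst (ν : ι × ℕ) : (shiftMap M θ Δ ν).1 = ν.1 := by
  rw [shiftMap, apply_ite Prod.fst, ite_self]

open scoped Classical in
theorem shiftMap_snd (ν : ι × ℕ) :
    (shiftMap M θ Δ ν).2 = if ν ∈ past M θ ∨ ν = θ then ν.2 else ν.2 + Δ := by
  rw [shiftMap, apply_ite Prod.snd]

theorem strictMono_shiftMap_snd (j : ι) :
    StrictMono fun m : ℕ => (shiftMap M θ Δ (j, m)).2 := by
  classical
  simp only [shiftMap_snd]
  exact strictMono_id.ite (strictMono_id.add_const Δ)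
    (fun _ _ hmn hn => .inl (mem_past_of_hb_s5 (hb_of_lt_s5 j hmn) hn))
    (fun m => Nat.le_add_right m Δ)

theorem shiftMap_injective : Function.Injective (shiftMap M θ Δ) := by
  rintro ⟨i, m⟩ ⟨j, n⟩ h
  obtain rfl : i = j := by simpa only [shiftMap_fst] using congrArg Prod.fst h
  have hmn : m = n := (strictMono_shiftMap_snd M θ Δ i).injective (congrArg Prod.snd h)
  rw [hmn]

theorem shiftMap_strictMono_injective_general :
    (∀ j : ι, StrictMono fun m : ℕ => (shiftMap M θ Δ (j, m)).2) ∧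
    Function.Injective (shiftMap M θ Δ) :=
  ⟨strictMono_shiftMap_snd M θ Δ, shiftMap_injective M θ Δ⟩

end

/-- For every process `j`, the time of `φ(j,m)` is strictly monotone in `m`;
consequently the shift map `φ` is injective on nodes. -/
theorem shiftMap_strictMono_injective {ι : Type*} (M : Set ((ι × ℕ) × (ι × ℕ)))
    (hM : ValidPattern M) (θ : ι × ℕ) (Δ : ℕ) (hΔ : 0 < Δ) :
    (∀ j : ι, StrictMono fun m : ℕ => (shiftMap M θ Δ (j, m)).2) ∧
    Function.Injective (shiftMap M θ Δ) := by
  exact shiftMap_strictMono_injective_general M θ Δ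
end

section
/- Sequential no-a-b-a lemma: Let H be an atomic register history over a value type α in which values are written at most once, and let i < j < k be positions of H holding operations that involve the values a, b, c : Option α, respectively. If a ≠ b, then a ≠ c. -/
/-- A register operation: a write of a value `v : α`, or a read returning
`w : Option α` (`read none` models reading the initial default value `⊥`). -/
inductive RegOp (α : Type*) where
  | write (v : α)
  | read (w : Option α)
  deriving DecidableEq

/-- The value of the last write in a list of register operations (`none` if there is
no write). -/
def lastWritten {α : Type*} (H : List (RegOp α)) : Option α :=
  H.foldl (fun acc op => match op with | .write v => some v | .read _ => acc) none

/-- A sequential history `H` is an atomic register history if every read returns the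
most recently written value (and `none` if no value was written before it). -/
def IsAtomicHistory {α : Type*} (H : List (RegOp α)) : Prop :=
  ∀ (k : ℕ) (w : Option α), H[k]? = some (RegOp.read w) → w = lastWritten (H.take k)

/-- Values are written at most once in `H`: no two distinct positions hold writes of
the same value. -/
def WrittenAtMostOnce {α : Type*} (H : List (RegOp α)) : Prop :=
  ∀ (i j : ℕ) (v : α), H[i]? = some (RegOp.write v) → H[j]? = some (RegOp.write v) → i = j

/-- An operation involves `w : Option α` if it is `read w`, or a `write v` with
`w = some v`. -/
def Involves {α : Type*} (op : RegOp α) (w : Option α) : Prop :=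
  op = RegOp.read w ∨ ∃ v : α, op = RegOp.write v ∧ w = some v

/-!
In an atomic history, an operation involves exactly the value the register holds right after it.
This value changes only at writes, and each value is written at most once, so the register holds
any given value over an interval of positions; hence it cannot return to `a` after
holding some `b ≠ a`.
-/

section

variable {α : Type*} {H : List (RegOp α)} {m n : ℕ}

theorem lastWritten_take_succ_of_write {v : α} (hn : H[n]? = some (.write v)) :
    lastWritten (H.take (n + 1)) = some v := by
  simp [List.take_add_one, lastWritten, hn]

theorem lastWritten_take_succ_of_forall_ne_write (hn : ∀ v, H[n]? ≠ some (.write v)) :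
    lastWritten (H.take (n + 1)) = lastWritten (H.take n) := by
  rw [List.take_add_one]
  rcases hop : H[n]? with _ | (v | w)
  · simp
  · exact absurd hop (hn v)
  · simp [lastWritten]

theorem exists_write_of_lastWritten_take_ne (hmn : m ≤ n)
    (hne : lastWritten (H.take m) ≠ lastWritten (H.take n)) :
    ∃ p v, m ≤ p ∧ p < n ∧ H[p]? = some (.write v) ∧ lastWritten (H.take n) = some v := by
  induction n, hmn using Nat.le_induction with
  | base => exact absurd rfl hne
  | succ n hmn ih =>
    by_cases hwrite : ∃ v, H[n]? = some (.write v)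
    · obtain ⟨v, hv⟩ := hwrite
      exact ⟨n, v, hmn, n.lt_succ_self, hv, lastWritten_take_succ_of_write hv⟩
    · have hstep := lastWritten_take_succ_of_forall_ne_write (not_exists.mp hwrite)
      rw [hstep] at hne ⊢
      obtain ⟨p, v, hmp, hpn, hp⟩ := ih hne
      exact ⟨p, v, hmp, hpn.trans n.lt_succ_self, hp⟩

theorem exists_write_of_lastWritten_take_eq_some {v : α}
    (hv : lastWritten (H.take n) = some v) : ∃ p < n, H[p]? = some (.write v) := by
  have hne : lastWritten (H.take 0) ≠ lastWritten (H.take n) := by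
    rw [hv]
    simp [lastWritten]
  obtain ⟨p, u, -, hpn, hp, hu⟩ := exists_write_of_lastWritten_take_ne n.zero_le hne
  obtain rfl : u = v := Option.some.inj (hu.symm.trans hv)
  exact ⟨p, hpn, hp⟩

theorem WrittenAtMostOnce.ordConnected_setOfPred_lastWritten_take_eq (hH : WrittenAtMostOnce H)
    (w : Option α) : {n | lastWritten (H.take n) = w}.OrdConnected := by
  refine ⟨fun l hl n hn m ⟨hlm, hmn⟩ ↦ ?_⟩
  rw [Set.mem_ofPred_eq] at hl hn ⊢
  by_contra hm
  obtain ⟨p, v, hmp, -, hp, hv⟩ :=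
    exists_write_of_lastWritten_take_ne hmn (fun heq ↦ hm (heq.trans hn))
  obtain ⟨q, hql, hq⟩ :=
    exists_write_of_lastWritten_take_eq_some (hl.trans (hn.symm.trans hv))
  have hqp : q < p := hql.trans_le (hlm.trans hmp)
  exact hqp.ne (hH q p v hq hp)

theorem IsAtomicHistory.lastWritten_take_succ_of_involves (hH : IsAtomicHistory H)
    {op : RegOp α} {w : Option α} (hn : H[n]? = some op) (hw : Involves op w) :
    lastWritten (H.take (n + 1)) = w := by
  rcases hw with rfl | ⟨v, rfl, rfl⟩
  · have hread : lastWritten (H.take (n + 1)) = lastWritten (H.take n) :=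
      lastWritten_take_succ_of_forall_ne_write (by simp [hn])
    exact hread.trans (hH n w hn).symm
  · exact lastWritten_take_succ_of_write hn

end

/-- Sequential no-a-b-a lemma: in an atomic register history in which values are
written at most once, if positions `i < j < k` hold operations involving `a`, `b`,
`c` respectively and `a ≠ b`, then `a ≠ c`. -/
theorem no_aba_sequential {α : Type*} (H : List (RegOp α)) (hA : IsAtomicHistory H)
    (hOnce : WrittenAtMostOnce H) (i j k : ℕ) (hij : i < j) (hjk : j < k)
    (opi opj opk : RegOp α)
    (hi : H[i]? = some opi) (hj : H[j]? = some opj) (hk : H[k]? = some opk)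
    (a b c : Option α)
    (ha : Involves opi a) (hb : Involves opj b) (hc : Involves opk c)
    (hab : a ≠ b) : a ≠ c := by
  rintro rfl
  have hai := hA.lastWritten_take_succ_of_involves hi ha
  have hbj := hA.lastWritten_take_succ_of_involves hj hb
  have hak := hA.lastWritten_take_succ_of_involves hk hc
  have haj : lastWritten (H.take (j + 1)) = a :=
    (hOnce.ordConnected_setOfPred_lastWritten_take_eq a).out hai hak
      ⟨Nat.succ_le_succ hij.le, Nat.succ_le_succ hjk.le⟩
  exact hab (haj.symm.trans hbj)
end

section
/- Observers become witnesses after the shift (core of the quorum/witness theorem): Let M be a valid message pattern and let X = (a, s, e) be an operation of process a with s ≤ e. Set θ = X.e = (a, e), Δ = e − s + 1, and let φ = φ_{θ,Δ} be the shift map. Then every node ν with X.s ⤳ ν (with respect to M) and time(φ(ν)) ≤ e satisfies ν ⤳ X.e (with respect to M) or ν = X.e. In other words, after delaying all events outside past(X.e) ∪ {X.e} by Δ, any node that a message chain from X.s reaches by time e lies on a message chain from X.s to X.e, so its process is a witness for X. -/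
section

variable {ι : Type*} {M : Set ((ι × ℕ) × (ι × ℕ))}

theorem ValidPattern.time_lt_of_hb (hM : ValidPattern M) {σ ν : ι × ℕ} (h : hb M σ ν) :
    σ.2 < ν.2 := by
  have step_lt : ∀ x y : ι × ℕ, (x.1 = y.1 ∧ x.2 < y.2) ∨ (x, y) ∈ M → x.2 < y.2 :=
    fun x y hxy => hxy.elim And.right (hM (x, y))
  have time_chain : Relation.TransGen (· < ·) σ.2 ν.2 := h.lift Prod.snd step_lt
  rwa [Relation.transGen_eq_self] at time_chain

theorem shiftMap_of_not_hb_or_eq {θ ν : ι × ℕ} (h : ¬(hb M ν θ ∨ ν = θ)) (Δ : ℕ) :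
    shiftMap M θ Δ ν = (ν.1, ν.2 + Δ) :=
  if_neg h

theorem observers_are_witnesses_general (hM : ValidPattern M) {σ θ ν : ι × ℕ} {Δ : ℕ}
    (hν : hb M σ ν) (hle : (shiftMap M θ Δ ν).2 ≤ σ.2 + Δ) : hb M ν θ ∨ ν = θ := by
  by_contra hθ
  have delayed : ν.2 + Δ ≤ σ.2 + Δ := by rwa [shiftMap_of_not_hb_or_eq hθ] at hle
  exact (hM.time_lt_of_hb hν).not_ge (Nat.le_of_add_le_add_right delayed)

end

/-- Observers become witnesses after the shift: with pivot `θ = X.e = (a,e)` and delay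
`Δ = e - s + 1`, every node `ν` reached by a message chain from `X.s = (a,s)` whose
shifted time is at most `e` must lie on a message chain from `X.s` to `X.e`, i.e.
`ν ⤳ X.e` or `ν = X.e`. -/
theorem observers_are_witnesses {ι : Type*} (M : Set ((ι × ℕ) × (ι × ℕ)))
    (hM : ValidPattern M) (a : ι) (s e : ℕ) (hse : s ≤ e) :
    ∀ ν : ι × ℕ, hb M (a, s) ν → (shiftMap M (a, e) (e - s + 1) ν).2 ≤ e →
      hb M ν (a, e) ∨ ν = (a, e) := by
  intro ν hν hle
  exact observers_are_witnesses_general hM hν (hle.trans (by omega : e ≤ s + (e - s + 1)))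
end

section
/- Non-transitivity of message chains between operations: There exist a valid message pattern M over the process type Fin 3 and operations X, Y, Z such that X mc Y and Y mc Z, but not X mc Z. -/
/-!
A process whose operation lasts for a positive time may send a message when the operation begins and
receive another only when it ends. The outgoing message is then a chain leaving the operation and
the incoming one a chain entering it, but the two do not compose: the nodes of the other sender,
together with those of the relaying process from the moment of reception on, are closed under
happens-before, and the outgoing message starts outside this set.
-/

section

variable {ι : Type*} {M : Set ((ι × ℕ) × (ι × ℕ))} {p q z : ι} {s d t r : ℕ}

theorem hb_of_mem_s13 {θ θ' : ι × ℕ} (h : (θ, θ') ∈ M) : hb M θ θ' :=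
  .single (.inr h)

/-- A set of nodes is future-closed for `M` if it contains, with each node, all later nodes of the
same process and the destinations of all messages of `M` sent from it. These sets serve as
invariants for proving that two nodes are not related by happens-before. -/
def FutureClosed (M : Set ((ι × ℕ) × (ι × ℕ))) (S : Set (ι × ℕ)) : Prop :=
  (∀ p t t', t < t' → (p, t) ∈ S → (p, t') ∈ S) ∧ ∀ m ∈ M, m.1 ∈ S → m.2 ∈ S

theorem FutureClosed.mem_of_hb {S : Set (ι × ℕ)} (hS : FutureClosed M S) {θ θ' : ι × ℕ}
    (h : hb M θ θ') (hθ : θ ∈ S) : θ' ∈ S := by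
  have mem_of_step : ∀ {ν ν' : ι × ℕ},
      (ν.1 = ν'.1 ∧ ν.2 < ν'.2) ∨ (ν, ν') ∈ M → ν ∈ S → ν' ∈ S := by
    rintro ⟨a, u⟩ ⟨b, v⟩ (⟨rfl, huv⟩ | hM) hν
    · exact hS.1 _ u v huv hν
    · exact hS.2 _ hM hν
  induction h with
  | single hstep => exact mem_of_step hstep hθ
  | tail _ hstep ih => exact mem_of_step hstep ih

/-- The pattern of two messages through the process `q`: one sent by `p` at time `s` and received by
`q` at time `d`, the other sent by `q` at time `t` and received by `z` at time `r`. The times `d`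
and `t` are independent, so `q` need not have received the first message when it sends the
second. -/
def relayPattern (p q z : ι) (s d t r : ℕ) : Set ((ι × ℕ) × (ι × ℕ)) :=
  {((p, s), (q, d)), ((q, t), (z, r))}

theorem validPattern_relayPattern (hsd : s < d) (htr : t < r) :
    ValidPattern (relayPattern p q z s d t r) := by
  rintro m (rfl | rfl)
  exacts [hsd, htr]

theorem futureClosed_relayPattern (hpq : p ≠ q) (htd : t < d) :
    FutureClosed (relayPattern p q z s d t r) {θ | θ.1 = p ∨ θ.1 = q ∧ d ≤ θ.2} := by
  refine ⟨fun a u v huv ha ↦ ha.imp_right fun ⟨haq, hdu⟩ ↦ ⟨haq, hdu.trans huv.le⟩, ?_⟩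
  rintro m (rfl | rfl) hm
  · exact .inr ⟨rfl, le_rfl⟩
  · rcases hm with hqp | ⟨-, hdt⟩
    · exact absurd hqp.symm hpq
    · exact absurd hdt htd.not_ge

theorem not_hb_relayPattern (hpq : p ≠ q) (hpz : p ≠ z) (hqz : q ≠ z) (htd : t < d) :
    ¬ hb (relayPattern p q z s d t r) (p, s) (z, r) := fun h ↦
  match (futureClosed_relayPattern hpq htd).mem_of_hb h (.inl rfl) with
  | .inl hzp => hpz hzp.symm
  | .inr ⟨hzq, _⟩ => hqz hzq.symm

/-- Here `s` is the start of `X`, `t` and `d` are the start and end of `Y`, and `r` is the end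
of `Z`. -/
theorem mc_not_transitive_general (hpq : p ≠ q) (hpz : p ≠ z) (hqz : q ≠ z)
    (hsd : s < d) (htr : t < r) (htd : t < d) :
    ∃ M : Set ((ι × ℕ) × (ι × ℕ)), ValidPattern M ∧
      hb M (p, s) (q, d) ∧ hb M (q, t) (z, r) ∧ ¬ hb M (p, s) (z, r) :=
  ⟨relayPattern p q z s d t r, validPattern_relayPattern hsd htr,
    hb_of_mem_s13 (.inl rfl), hb_of_mem_s13 (.inr rfl), not_hb_relayPattern hpq hpz hqz htd⟩

end

/-- Non-transitivity of message chains between operations: there are a valid message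
pattern over `Fin 3` and operations `X = (p,sX,eX)`, `Y = (q,sY,eY)`, `Z = (z,sZ,eZ)`
with `X mc Y` and `Y mc Z` but not `X mc Z`. -/
theorem mc_not_transitive :
    ∃ (M : Set ((Fin 3 × ℕ) × (Fin 3 × ℕ))) (p q z : Fin 3) (sX eX sY eY sZ eZ : ℕ),
      ValidPattern M ∧ sX ≤ eX ∧ sY ≤ eY ∧ sZ ≤ eZ ∧
      hb M (p, sX) (q, eY) ∧ hb M (q, sY) (z, eZ) ∧ ¬ hb M (p, sX) (z, eZ) := by
  obtain ⟨M, hM, hXY, hYZ, hXZ⟩ :=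
    mc_not_transitive_general (p := (0 : Fin 3)) (q := 1) (z := 2) (s := 0) (d := 1) (t := 0)
      (r := 1) (by decide) (by decide) (by decide) one_pos one_pos one_pos
  exact ⟨M, 0, 1, 2, 0, 0, 0, 1, 0, 1, hM, le_rfl, zero_le_one, zero_le_one, hXY, hYZ, hXZ⟩
end
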